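/- arXiv:1311.4374 — 2 statements merged into one kernel-verified Lean document; each statement's English description precedes it below -/
import Mathlib

section
/- Let F and G be unital C*-algebras, let φ : F → G be a surjective unital *-homomorphism, and let ψ : C([0,1], F) → C([0,1], G) be the *-homomorphism x ↦ φ ∘ x. If v is a unitary element of C([0,1], G) and x is a unitary element of F with φ(x) = v(0), then there exists a unitary element u of C([0,1], F) with ψ(u) = v and u(0) = x. -/
/-!
Write `A = C([0,1], F)`, `B = C([0,1], G)` and `ψ : A → B` for composition with `φ`.

* `ψ` is surjective. The open mapping theorem gives preimages under `φ` with norm control, and a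
  partition of unity patches them to an approximate lift of a given path with error at most half
  its norm; iterating produces an exact lift.
* The unitaries of `B` that lift to unitaries of `A` form a subgroup. It contains the ball of
  radius `2` around `1`, since such a unitary is `exp (i h)` with `h` self-adjoint, and `h` lifts
  to a self-adjoint element. Hence the subgroup is open, and therefore clopen.
* The path `s ↦ (t ↦ v (s t))` of unitaries of `B` joins the constant `v 0 = φ x`, which lifts, to
  `v`. So `v` lifts to some unitary `u`, and `t ↦ u t * (u 0)* * x` is a lift of `v` starting at
  `x`.
-/

/-- The iteration step of the open mapping theorem: if every `y` is approximated within `‖y‖ / 2`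
by the image of an element of norm `≤ C * ‖y‖`, then `f` is surjective. -/
lemma surjective_of_approx {E F : Type*} [NormedAddCommGroup E] [CompleteSpace E]
    [NormedAddCommGroup F] (f : E →+ F) (hf : Continuous f) (C : ℝ) (hC : 0 ≤ C)
    (H : ∀ y, ∃ x, ‖y - f x‖ ≤ 1 / 2 * ‖y‖ ∧ ‖x‖ ≤ C * ‖y‖) : Function.Surjective f := by
  choose g hg hgC using H
  intro y
  -- `r n` is the part of `y` that is still without a preimage after `n` steps.
  let r : ℕ → F := fun n => (fun z => z - f (g z))^[n] y
  have hr : ∀ n, r (n + 1) = r n - f (g (r n)) := fun n => Function.iterate_succ_apply' _ _ _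
  have hrn : ∀ n, ‖r n‖ ≤ (1 / 2 : ℝ) ^ n * ‖y‖ := by
    intro n
    induction n with
    | zero => simp [r]
    | succ n ih =>
      rw [hr, pow_succ', mul_assoc]
      exact (hg _).trans (by gcongr)
  have hs : Summable fun n => g (r n) := by
    refine Summable.of_norm_bounded
      (summable_geometric_two.mul_right (C * ‖y‖)) fun n => (hgC _).trans ?_
    calc C * ‖r n‖ ≤ C * ((1 / 2 : ℝ) ^ n * ‖y‖) := by gcongr; exact hrn n
      _ = _ := by ring
  have hpart : ∀ n, f (∑ i ∈ Finset.range n, g (r i)) = y - r n := by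
    intro n
    induction n with
    | zero => simp [r]
    | succ n ih => rw [Finset.sum_range_succ, map_add, ih, hr]; abel
  have hr0 : Filter.Tendsto r Filter.atTop (nhds 0) := by
    refine squeeze_zero_norm hrn ?_
    simpa using (tendsto_pow_atTop_nhds_zero_of_lt_one (r := (1 / 2 : ℝ))
      (by norm_num) (by norm_num)).mul_const ‖y‖
  refine ⟨∑' n, g (r n), tendsto_nhds_unique
    ((hf.tendsto _).comp hs.hasSum.tendsto_sum_nat) ?_⟩
  simpa [Function.comp_def, hpart] using hr0.const_sub y

/-- Continuous functions on a compact Hausdorff space lift along a surjective bounded operator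
between Banach spaces. -/
lemma exists_lift_continuousMap {X E F : Type*} [TopologicalSpace X] [CompactSpace X] [T2Space X]
    [NormedAddCommGroup E] [NormedSpace ℝ E] [CompleteSpace E]
    [NormedAddCommGroup F] [NormedSpace ℝ F] [CompleteSpace F]
    (f : E →L[ℝ] F) (hf : Function.Surjective f) (h : C(X, F)) :
    ∃ k : C(X, E), ∀ t, f (k t) = h t := by
  obtain ⟨C, hC, hpre⟩ := f.exists_preimage_norm_le hf
  let Φ : C(X, E) →+ C(X, F) := (f.compLeftContinuous ℝ X).toLinearMap.toAddMonoidHom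
  have hΦ : ∀ k t, Φ k t = f (k t) := fun _ _ => rfl
  have hsurj : Function.Surjective Φ := by
    refine surjective_of_approx Φ (f.compLeftContinuous ℝ X).continuous C hC.le fun y => ?_
    rcases eq_or_ne y 0 with rfl | hy
    · exact ⟨0, by simp⟩
    have hy' : 0 < 1 / 2 * ‖y‖ := by positivity
    obtain ⟨k, hk⟩ := exists_continuous_forall_mem_convex_of_local_const
      (t := fun t : X => f ⁻¹' Metric.closedBall (y t) (1 / 2 * ‖y‖) ∩
        Metric.closedBall (0 : E) (C * ‖y‖))
      (fun t => ((convex_closedBall _ _).linear_preimage f.toLinearMap).inter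
        (convex_closedBall _ _)) (fun t => by
          obtain ⟨c, hc, hcn⟩ := hpre (y t)
          refine ⟨c, ?_⟩
          filter_upwards [(map_continuous y).tendsto t |>.eventually
            (Metric.closedBall_mem_nhds (y t) hy')] with s hs
          refine ⟨?_, ?_⟩
          · simpa [hc, dist_comm] using hs
          · simpa using hcn.trans (by gcongr; exact y.norm_coe_le_norm t))
    refine ⟨k, ?_, ?_⟩
    · refine (ContinuousMap.norm_le _ hy'.le).2 fun t => ?_
      have := (hk t).1
      rwa [Set.mem_preimage, Metric.mem_closedBall, dist_comm, dist_eq_norm] at this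
    · refine (ContinuousMap.norm_le _ (by positivity)).2 fun t => ?_
      simpa using (hk t).2
  obtain ⟨k, hk⟩ := hsurj h
  exact ⟨k, fun t => by rw [← hk, hΦ]⟩

open scoped CStarAlgebra in
/-- Under a surjective *-homomorphism, unitaries at distance less than `2` from `1` lift to
unitaries. -/
lemma exists_unitary_lift_of_near_one {A B : Type*} [CStarAlgebra A] [CStarAlgebra B]
    (ψ : A →⋆ₐ[ℂ] B) (hψ : Function.Surjective ψ) (w : unitary B) (hw : ‖(w - 1 : B)‖ < 2) :
    ∃ u : unitary A, ψ u = w := by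
  obtain ⟨a, ha⟩ := hψ (Unitary.argSelfAdjoint w : B)
  -- The real part of `a` still maps to the self-adjoint element `argSelfAdjoint w`.
  have hre : ψ (realPart a : A) = (Unitary.argSelfAdjoint w : B) := by
    have hs : star (Unitary.argSelfAdjoint w : B) = Unitary.argSelfAdjoint w :=
      (Unitary.argSelfAdjoint w).2
    rw [realPart_apply_coe, ← Complex.coe_smul, map_smul, map_add, map_star, ha, hs, ← two_smul ℂ,
      smul_smul]
    norm_num
  refine ⟨selfAdjoint.expUnitary (realPart a), ?_⟩
  conv_rhs => rw [← expUnitary_argSelfAdjoint hw]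
  let +nondep : NormedAlgebra ℚ A := .restrictScalars ℚ ℂ A
  let +nondep : NormedAlgebra ℚ B := .restrictScalars ℚ ℂ B
  change ψ (NormedSpace.exp (Complex.I • (realPart a : A))) =
    NormedSpace.exp (Complex.I • (Unitary.argSelfAdjoint w : B))
  rw [NormedSpace.map_exp ψ (map_continuous ψ), map_smul, hre]

/-- The subgroup of unitaries of `B` that are images of unitaries of `A` under `ψ`. -/
def liftableUnitaries {A B : Type*} [CStarAlgebra A] [CStarAlgebra B] (ψ : A →⋆ₐ[ℂ] B) :
    Subgroup (unitary B) :=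
  (Unitary.map (⟨(ψ : A →* B), map_star ψ⟩ : A →⋆* B)).toMonoidHom.range

lemma mem_liftableUnitaries {A B : Type*} [CStarAlgebra A] [CStarAlgebra B] {ψ : A →⋆ₐ[ℂ] B}
    {w : unitary B} : w ∈ liftableUnitaries ψ ↔ ∃ u : unitary A, ψ u = w :=
  exists_congr fun _ => Subtype.ext_iff

lemma isClopen_liftableUnitaries {A B : Type*} [CStarAlgebra A] [CStarAlgebra B]
    (ψ : A →⋆ₐ[ℂ] B) (hψ : Function.Surjective ψ) :
    IsClopen (liftableUnitaries ψ : Set (unitary B)) := by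
  have ho : IsOpen (liftableUnitaries ψ : Set (unitary B)) := by
    refine (liftableUnitaries ψ).isOpen_of_mem_nhds (g := 1) ?_
    filter_upwards [Metric.ball_mem_nhds (1 : unitary B) two_pos] with w hw
    exact mem_liftableUnitaries.2 (exists_unitary_lift_of_near_one ψ hψ w
      (by simpa [Subtype.dist_eq, dist_eq_norm] using hw))
  exact ⟨(liftableUnitaries ψ).isClosed_of_isOpen ho, ho⟩

lemma mem_unitary_continuousMap {X A : Type*} [TopologicalSpace X] [CompactSpace X]
    [CStarAlgebra A] (f : C(X, A)) (hf : ∀ t, f t ∈ unitary A) : f ∈ unitary C(X, A) :=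
  Unitary.mem_iff.2 ⟨ContinuousMap.ext fun t => (Unitary.mem_iff.1 (hf t)).1,
    ContinuousMap.ext fun t => (Unitary.mem_iff.1 (hf t)).2⟩

/-- Let `φ : F → G` be a surjective unital *-homomorphism of unital
C*-algebras and `ψ : C([0,1], F) → C([0,1], G)`, `x ↦ φ ∘ x`.  If `v` is a unitary of
`C([0,1], G)` and `x` is a unitary of `F` with `φ(x) = v(0)`, then there is a unitary
`u` of `C([0,1], F)` with `ψ(u) = v` and `u(0) = x`. -/
theorem stmt_10 {F G : Type*} [CStarAlgebra F] [CStarAlgebra G]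
    (φ : F →⋆ₐ[ℂ] G) (hφ : Function.Surjective φ)
    (v : C(unitInterval, G)) (hv : ∀ t, v t ∈ unitary G)
    (x : F) (hx : x ∈ unitary F) (hx0 : φ x = v 0) :
    ∃ u : C(unitInterval, F), (∀ t, u t ∈ unitary F) ∧ (∀ t, φ (u t) = v t) ∧ u 0 = x := by
  have hc : Continuous φ := by open scoped CStarAlgebra in exact map_continuous φ
  let ψ : C(unitInterval, F) →⋆ₐ[ℂ] C(unitInterval, G) :=
    ContinuousMap.compStarAlgHom unitInterval φ hc
  have hψ : Function.Surjective ψ := fun h => by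
    obtain ⟨k, hk⟩ := exists_lift_continuousMap
      (⟨φ.toAlgHom.toLinearMap.restrictScalars ℝ, hc⟩ : F →L[ℝ] G) hφ h
    exact ⟨k, ContinuousMap.ext hk⟩
  let c : C(unitInterval, C(unitInterval, G)) :=
    ContinuousMap.curry (v.comp ⟨fun p : unitInterval × unitInterval => p.1 * p.2, by fun_prop⟩)
  let γ : unitInterval → unitary C(unitInterval, G) := fun s =>
    ⟨c s, mem_unitary_continuousMap _ fun t => hv _⟩
  have hγ : Continuous γ := c.continuous.subtype_mk _
  have hpre : γ ⁻¹' (liftableUnitaries ψ) = Set.univ := by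
    refine ((isClopen_liftableUnitaries ψ hψ).preimage hγ).eq_univ ⟨0, ?_⟩
    refine mem_liftableUnitaries.2
      ⟨⟨ContinuousMap.const _ x, mem_unitary_continuousMap _ fun _ => hx⟩, ?_⟩
    ext t
    change φ x = v (0 * t)
    rw [hx0, zero_mul]
  have h1 : (1 : unitInterval) ∈ γ ⁻¹' (liftableUnitaries ψ) := hpre ▸ Set.mem_univ _
  obtain ⟨u, hu⟩ := mem_liftableUnitaries.1 h1
  have huv : ∀ t, φ ((u : C(unitInterval, F)) t) = v t := fun t => by
    have h := congrArg (fun w : C(unitInterval, G) => w t) hu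
    change φ ((u : C(unitInterval, F)) t) = v (1 * t) at h
    rwa [one_mul] at h
  have huu : ∀ t, (u : C(unitInterval, F)) t ∈ unitary F := fun t =>
    Unitary.mem_iff.2 ⟨congrArg (fun f : C(unitInterval, F) => f t) (Unitary.mem_iff.1 u.2).1,
      congrArg (fun f : C(unitInterval, F) => f t) (Unitary.mem_iff.1 u.2).2⟩
  refine ⟨(u : C(unitInterval, F)) *
    ContinuousMap.const _ (star ((u : C(unitInterval, F)) 0) * x), fun t => ?_, fun t => ?_, ?_⟩
  · exact mul_mem (huu t) (mul_mem (Unitary.star_mem (huu 0)) hx)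
  · change φ ((u : C(unitInterval, F)) t * (star ((u : C(unitInterval, F)) 0) * x)) = v t
    rw [map_mul, map_mul, map_star, huv, huv, hx0, (Unitary.mem_iff.1 (hv 0)).1, mul_one]
  · change (u : C(unitInterval, F)) 0 * (star ((u : C(unitInterval, F)) 0) * x) = x
    rw [← mul_assoc, (Unitary.mem_iff.1 (huu 0)).2, one_mul]
end

section
/- Let n ≥ 2 be an integer and k₁, …, k_n positive integers; put m := 1 + k₁ + ⋯ + k_n. Then there exists a topological embedding ι of the product S^{k₁} × ⋯ × S^{k_n} of unit spheres into the closed unit ball B_m of ℝ^m such that the complement B_m ∖ ι(S^{k₁} × ⋯ × S^{k_n}) has exactly two connected components, one of which is homeomorphic to ℝ^{1+k_n} × (S^{k₁} × ⋯ × S^{k_{n−1}}). -/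
/-!
Put `N = S^{k₁} × ⋯ × S^{k_{n-1}}`. Polar coordinates, used one sphere at a time, realize `N × ℝ`
as an open subset of `ℝ^{m - kₙ}` (`exists_isOpenEmbedding_prod_real`). Multiplying with
`Y = ℝ^{kₙ}` gives an open embedding `e` of `N × ℝ^{1 + kₙ}` into `ℝ^m`, and `ι` is a rescaling of
the restriction of `e` to the unit sphere bundle.

The open disc bundle `e (N × B)` is one piece of the complement: it is open, connected because
each `kᵢ` is positive, and homeomorphic to `N × ℝ^{1 + kₙ}`. The other piece is the outside of the
closed disc bundle. No separation theorem is needed for it: `Y` is a direct factor, so any point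
of `ℝ^m` outside the closed disc bundle can be moved off to large `‖y‖` along its `Y`-coordinate
without meeting the bundle, and the region of large `‖y‖` is joined up over a point of `ℝ^{m - kₙ}`
away from the compact projection of the bundle (`isConnected_outside`). The radial retraction onto
the closed ball transfers connectedness from `ℝ^m` to the ball (`isConnected_closedBall_diff`).
-/

namespace SphereProduct

open Set Metric Topology Module

/-- The product `S^{k₁} × ⋯ × S^{kₙ}` of Euclidean unit spheres. -/
abbrev SphereProd {n : ℕ} (k : Fin n → ℕ) : Type :=
  (i : Fin n) → sphere (0 : EuclideanSpace ℝ (Fin (k i + 1))) 1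

/-! ### Spaces split into two connected open pieces -/

lemma connectedComponent_eq_of_isOpen {X : Type*} [TopologicalSpace X] {U O : Set X}
    (hU : IsOpen U) (hO : IsOpen O) (hUO : Uᶜ = O) (cU : IsConnected U) {x : X} (hx : x ∈ U) :
    connectedComponent x = U := by
  have hclopen : IsClopen U := ⟨⟨hUO ▸ hO⟩, hU⟩
  exact (hclopen.connectedComponent_subset hx).antisymm
    (cU.isPreconnected.subset_connectedComponent hx)

lemma card_connectedComponents_eq_two {X : Type*} [TopologicalSpace X] {U O : Set X}
    (hU : IsOpen U) (hO : IsOpen O) (hUO : Uᶜ = O) (cU : IsConnected U) (cO : IsConnected O) :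
    Nat.card (ConnectedComponents X) = 2 := by
  obtain ⟨x, hx⟩ := cU.nonempty
  obtain ⟨y, hy⟩ := cO.nonempty
  have hOU : Oᶜ = U := by rw [← hUO, compl_compl]
  have ex := connectedComponent_eq_of_isOpen hU hO hUO cU hx
  have ey := connectedComponent_eq_of_isOpen hO hU hOU cO hy
  refine Nat.card_eq_two_iff.2 ⟨x, y, fun h => ?_, eq_univ_of_forall fun c => ?_⟩
  · rw [ConnectedComponents.coe_eq_coe, ex, ey] at h
    exact (hUO.symm ▸ hy : y ∈ Uᶜ) (h.symm ▸ hy)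
  · obtain ⟨z, rfl⟩ := ConnectedComponents.surjective_coe c
    by_cases hz : z ∈ U
    · left
      rw [ConnectedComponents.coe_eq_coe, ex, connectedComponent_eq_of_isOpen hU hO hUO cU hz]
    · right
      have hz' : z ∈ O := hUO ▸ hz
      rw [mem_singleton_iff, ConnectedComponents.coe_eq_coe, ey,
        connectedComponent_eq_of_isOpen hO hU hOU cO hz']

/-! ### Complements of compact sets in the unit ball -/

/-- Removing from the closed unit ball a set that lies in the open unit ball leaves a connected
set as soon as removing it from the whole space does: the radial retraction onto the ball maps
the latter complement onto the former. -/
lemma isConnected_closedBall_diff {E : Type*} [NormedAddCommGroup E] [NormedSpace ℝ E]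
    {C : Set E} (hC : C ⊆ ball 0 1) (h : IsConnected Cᶜ) : IsConnected (closedBall 0 1 \ C) := by
  let r : E → E := fun x => (max 1 ‖x‖)⁻¹ • x
  have hr : Continuous r := by
    refine Continuous.smul (Continuous.inv₀ (by fun_prop) fun x => ?_) continuous_id
    exact (lt_of_lt_of_le one_pos (le_max_left _ _)).ne'
  have hr1 : ∀ x : E, ‖x‖ ≤ 1 → r x = x := fun x hx => by simp [r, max_eq_left hx]
  have hr2 : ∀ x : E, 1 < ‖x‖ → ‖r x‖ = 1 := fun x hx => by
    have : ‖x‖ ≠ 0 := by positivity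
    simp [r, max_eq_right hx.le, norm_smul, this]
  have : closedBall 0 1 \ C = r '' Cᶜ := by
    ext y
    constructor
    · rintro ⟨hy, hyC⟩
      exact ⟨y, hyC, hr1 y (by simpa using hy)⟩
    · rintro ⟨x, hx, rfl⟩
      rcases le_or_gt ‖x‖ 1 with h1 | h1
      · rw [hr1 x h1]
        exact ⟨by simpa using h1, hx⟩
      · refine ⟨by simp [hr2 x h1], fun hc => ?_⟩
        have := hC hc
        rw [mem_ball_zero_iff, hr2 x h1] at this
        exact lt_irrefl _ this
  rw [this]
  exact h.image r hr.continuousOn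

/-- A thickened copy `e` of `N × V` in `E`, whose closed unit disc bundle has connected complement
in `E`, can be rescaled into the unit ball; the unit sphere bundle then cuts the closed ball into
two connected open pieces: the open disc bundle, and the outside of the closed disc bundle. -/
theorem exists_embedding_of_thickening {N V E : Type*} [TopologicalSpace N] [CompactSpace N]
    [ConnectedSpace N] [NormedAddCommGroup V] [NormedSpace ℝ V] [FiniteDimensional ℝ V]
    [NormedAddCommGroup E] [NormedSpace ℝ E]
    (e : N × V → E) (he : IsOpenEmbedding e)
    (hC : IsConnected (e '' (univ ×ˢ closedBall 0 1))ᶜ) :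
    ∃ ι : N × sphere (0 : V) 1 → E, IsEmbedding ι ∧ (∀ p, ι p ∈ closedBall 0 1) ∧
      Nat.card (ConnectedComponents ↥(closedBall (0 : E) 1 \ range ι)) = 2 ∧
      ∃ x : ↥(closedBall (0 : E) 1 \ range ι), Nonempty (↥(connectedComponent x) ≃ₜ V × N) := by
  have hK : IsCompact (e '' (univ ×ˢ closedBall 0 1)) :=
    (isCompact_univ.prod (isCompact_closedBall 0 1)).image he.continuous
  obtain ⟨R, hR, hKR⟩ := hK.isBounded.subset_ball_lt 0 0
  let s : E ≃ₜ E := Homeomorph.smulOfNeZero R⁻¹ (inv_ne_zero hR.ne')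
  have hs : ∀ x, s x = R⁻¹ • x := fun _ => rfl
  let g : N × V → E := s ∘ e
  have hg : IsOpenEmbedding g := s.isOpenEmbedding.comp he
  set C : Set E := g '' (univ ×ˢ closedBall 0 1) with hCdef
  have hCs : C = s '' (e '' (univ ×ˢ closedBall 0 1)) := image_comp _ _ _
  have hCball : C ⊆ ball 0 1 := by
    rw [hCs]
    rintro _ ⟨x, hx, rfl⟩
    have := mem_ball_zero_iff.1 (hKR hx)
    rw [mem_ball_zero_iff, hs, norm_smul, norm_inv, Real.norm_of_nonneg hR.le]
    rwa [inv_mul_lt_one₀ hR]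
  have hCconn : IsConnected Cᶜ := by
    rw [hCs, ← s.image_compl]
    exact hC.image _ s.continuous.continuousOn
  have hCclosed : IsClosed C := by
    rw [hCs]
    exact (hK.image s.continuous).isClosed
  let ι : N × sphere (0 : V) 1 → E := fun p => g (p.1, p.2)
  have hι : IsEmbedding ι :=
    hg.isEmbedding.comp (IsEmbedding.id.prodMap IsEmbedding.subtypeVal)
  have hrange : ∀ p v, g (p, v) ∈ range ι ↔ ‖v‖ = 1 := fun p v => by
    constructor
    · rintro ⟨⟨q, w⟩, h⟩
      have h' : (w : V) = v := (Prod.ext_iff.1 (hg.injective h)).2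
      rw [← h']
      simp
    · intro h
      exact ⟨(p, ⟨v, by simpa using h⟩), rfl⟩
  have hmemC : ∀ p v, g (p, v) ∈ C ↔ ‖v‖ ≤ 1 := fun p v => by
    rw [hCdef, hg.injective.mem_set_image]
    simp
  have hball : ∀ p v, ‖v‖ ≤ 1 → g (p, v) ∈ closedBall 0 1 := fun p v h =>
    ball_subset_closedBall (hCball ((hmemC p v).2 h))
  have hrangeC : range ι ⊆ C := by
    rintro _ ⟨⟨q, w⟩, rfl⟩
    exact (hmemC _ _).2 (by simp)
  let j : N × ball (0 : V) 1 → ↥(closedBall (0 : E) 1 \ range ι) := fun p =>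
    ⟨g (p.1, p.2), hball _ _ (by simpa using (mem_ball_zero_iff.1 p.2.2).le), fun h => by
      have h1 := (hrange _ _).1 h
      have h2 := mem_ball_zero_iff.1 p.2.2
      exact h2.ne h1⟩
  have hj : IsEmbedding j := by
    refine IsEmbedding.of_comp (by fun_prop) continuous_subtype_val
      (hg.isEmbedding.comp (IsEmbedding.id.prodMap IsEmbedding.subtypeVal))
  set U := range j with hU
  let O : Set ↥(closedBall (0 : E) 1 \ range ι) := Subtype.val ⁻¹' Cᶜ
  have hUO : Uᶜ = O := by
    rw [compl_eq_comm]
    ext x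
    rw [mem_compl_iff, mem_preimage, mem_compl_iff, not_not]
    constructor
    · rintro ⟨⟨p, v⟩, hv, hx⟩
      have hv' : ‖v‖ ≤ 1 := by simpa using hv
      have hv1 : ‖v‖ ≠ 1 := fun h => x.2.2 (hx ▸ (hrange p v).2 h)
      exact ⟨(p, ⟨v, mem_ball_zero_iff.2 (lt_of_le_of_ne hv' hv1)⟩), Subtype.ext hx⟩
    · rintro ⟨⟨p, v⟩, rfl⟩
      exact (hmemC _ _).2 (mem_ball_zero_iff.1 v.2).le
  have hOopen : IsOpen O := hCclosed.isOpen_compl.preimage continuous_subtype_val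
  have hUopen : IsOpen U := by
    have : U = Subtype.val ⁻¹' (g '' (univ ×ˢ ball 0 1)) := by
      ext x
      constructor
      · rintro ⟨⟨p, v⟩, rfl⟩
        exact ⟨(p, v), ⟨trivial, v.2⟩, rfl⟩
      · rintro ⟨⟨p, v⟩, ⟨-, hv⟩, hx⟩
        exact ⟨(p, ⟨v, hv⟩), Subtype.ext hx⟩
    rw [this]
    exact (hg.isOpenMap _ (isOpen_univ.prod isOpen_ball)).preimage continuous_subtype_val
  have cO : IsConnected O := by
    have hconn := isConnected_closedBall_diff hCball hCconn
    have himage : Subtype.val '' O = closedBall 0 1 \ C := by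
      rw [Subtype.image_preimage_coe]
      ext y
      constructor
      · rintro ⟨h1, h2⟩
        exact ⟨h1.1, h2⟩
      · rintro ⟨h1, h2⟩
        exact ⟨⟨h1, fun h => h2 (hrangeC h)⟩, h2⟩
    refine ⟨?_, ?_⟩
    · rw [← image_nonempty (f := Subtype.val), himage]
      exact hconn.nonempty
    · rw [← IsInducing.subtypeVal.isPreconnected_image, himage]
      exact hconn.isPreconnected
  have cU : IsConnected U := by
    have : ConnectedSpace (ball (0 : V) 1) :=
      Homeomorph.unitBall.surjective.connectedSpace Homeomorph.unitBall.continuous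
    exact isConnected_range hj.continuous
  obtain ⟨x, hx⟩ := cU.nonempty
  refine ⟨ι, hι, fun p => hball _ _ (by simp),
    card_connectedComponents_eq_two hUopen hOopen hUO cU cO, x, ⟨?_⟩⟩
  exact (Homeomorph.setCongr (connectedComponent_eq_of_isOpen hUopen hOopen hUO cU hx)).trans
    (hj.toHomeomorph.symm.trans (((Homeomorph.refl N).prodCongr Homeomorph.unitBall.symm).trans
      (Homeomorph.prodComm N V)))

/-! ### The outside of the solid piece -/

/-- The disc bundle is `{(f (p, t), y) | t² + ‖y‖² ≤ 1}`. From any point outside it one stays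
outside when moving the `Y`-coordinate away from the origin to norm `2`; there the `Z`-coordinate
is unconstrained and can be moved to a fixed `z₀` off the compact set `f (N × [-1, 1])`, above
which the `Y`-coordinate is unconstrained. -/
lemma isConnected_outside {N Z Y : Type*} [TopologicalSpace N] [CompactSpace N]
    [NormedAddCommGroup Z] [NormedSpace ℝ Z] [Nontrivial Z]
    [NormedAddCommGroup Y] [NormedSpace ℝ Y] [Nontrivial Y]
    (f : N × ℝ → Z) (hf : Continuous f) :
    IsConnected {q : Z × Y | ∀ p t, f (p, t) = q.1 → 1 < t ^ 2 + ‖q.2‖ ^ 2} := by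
  set S := {q : Z × Y | ∀ p t, f (p, t) = q.1 → 1 < t ^ 2 + ‖q.2‖ ^ 2} with hS
  have : NoncompactSpace Z := NormedSpace.noncompactSpace ℝ Z
  have hK : IsCompact (f '' (univ ×ˢ Icc (-1) 1)) :=
    (isCompact_univ.prod isCompact_Icc).image hf
  obtain ⟨z₀, hz₀⟩ := (ne_univ_iff_exists_notMem _).1 hK.ne_univ
  have hz₀S : ∀ y : Y, (z₀, y) ∈ S := fun y p t h => by
    have ht : t ∉ Icc (-1 : ℝ) 1 := fun ht => hz₀ ⟨(p, t), ⟨trivial, ht⟩, h⟩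
    have : 1 < |t| := by
      by_contra! h'
      exact ht (abs_le.1 h')
    have : 1 < t ^ 2 := by
      rw [← sq_abs]
      nlinarith
    nlinarith [sq_nonneg ‖y‖]
  have hfar : ∀ (z : Z) (y : Y), 1 < ‖y‖ → (z, y) ∈ S := fun z y hy p t _ => by
    show 1 < t ^ 2 + ‖y‖ ^ 2
    nlinarith [sq_nonneg t]
  have hup : ∀ (z : Z) (y y' : Y), ‖y‖ ≤ ‖y'‖ → (z, y) ∈ S → (z, y') ∈ S :=
    fun z y y' hy h p t ht => by
      have h1 := h p t ht
      have h2 : ‖y‖ ^ 2 ≤ ‖y'‖ ^ 2 := by gcongr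
      exact lt_of_lt_of_le h1 (by simpa using h2)
  refine IsPathConnected.isConnected ⟨(z₀, 0), hz₀S 0, ?_⟩
  rintro ⟨z, y⟩ hzy
  obtain ⟨u, hu, hray⟩ : ∃ u : Y, ‖u‖ = 1 ∧ y = ‖y‖ • u := by
    by_cases hy : y = 0
    · obtain ⟨u, hu⟩ := exists_norm_eq Y (zero_le_one (α := ℝ))
      exact ⟨u, hu, by simp [hy]⟩
    · have : ‖y‖ ≠ 0 := by simpa using hy
      exact ⟨‖y‖⁻¹ • y, by simp [norm_smul, this], by simp [smul_smul, this]⟩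
  set y' : Y := (‖y‖ + 2) • u with hy'
  have hy'n : ‖y'‖ = ‖y‖ + 2 := by
    rw [hy', norm_smul, hu, mul_one, Real.norm_of_nonneg (by positivity)]
  have h1 : JoinedIn S (z, y) (z, y') := by
    apply JoinedIn.of_segment_subset
    rw [← Prod.image_mk_segment_right]
    rintro _ ⟨_, ⟨a, b, ha, hb, hab, rfl⟩, rfl⟩
    refine hup z y _ ?_ hzy
    have hw : a • y + b • y' = (‖y‖ + 2 * b) • u := by
      rw [hy', congrArg (a • ·) hray, smul_smul, smul_smul, ← add_smul]
      congr 1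
      linear_combination ‖y‖ * hab
    rw [hw, norm_smul, hu, mul_one, Real.norm_of_nonneg (by positivity)]
    linarith
  have h2 : JoinedIn S (z, y') (z₀, y') := by
    apply JoinedIn.of_segment_subset
    rw [← Prod.image_mk_segment_left]
    rintro _ ⟨w, -, rfl⟩
    exact hfar w y' (by rw [hy'n]; linarith [norm_nonneg y])
  have h3 : JoinedIn S (z₀, y') (z₀, 0) := by
    apply JoinedIn.of_segment_subset
    rw [← Prod.image_mk_segment_right]
    rintro _ ⟨w, -, rfl⟩
    exact hz₀S w
  exact ((h1.trans h2).trans h3).symm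

/-! ### Thickened products of spheres in codimension one -/

lemma isOpenEmbedding_exp_smul (E : Type*) [NormedAddCommGroup E] [NormedSpace ℝ E] :
    IsOpenEmbedding fun q : sphere (0 : E) 1 × ℝ => Real.exp q.2 • (q.1 : E) := by
  have h1 : IsOpenEmbedding fun q : sphere (0 : E) 1 × Ioi (0 : ℝ) => (q.2 : ℝ) • (q.1 : E) := by
    refine ((isOpen_compl_singleton (x := (0 : E))).isOpenEmbedding_subtypeVal.comp
      (homeomorphUnitSphereProd E).symm.isOpenEmbedding)
  exact h1.comp
    (((Homeomorph.refl _).prodCongr Real.expOrderIso.toHomeomorph).isOpenEmbedding)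

/-- Splitting off the last factor of a finite product. -/
def piSnocHomeomorph {n : ℕ} (A : Fin (n + 1) → Type*) [∀ i, TopologicalSpace (A i)] :
    ((i : Fin (n + 1)) → A i) ≃ₜ ((i : Fin n) → A i.castSucc) × A (Fin.last n) where
  toFun p := (fun i => p i.castSucc, p (Fin.last n))
  invFun q := Fin.snoc q.1 q.2
  left_inv p := Fin.snoc_init_self p
  right_inv q := by ext <;> simp
  continuous_toFun := by fun_prop
  continuous_invFun := Continuous.finSnoc continuous_fst continuous_snd

/-- `S^{k₁} × ⋯ × S^{kₙ} × ℝ` is an open subset of `ℝ^{1 + k₁ + ⋯ + kₙ}`: one sphere at a time,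
`N × S^k × ℝ ↪ N × ℝ^{k+1} ≅ (N × ℝ) × ℝ^k`, by polar coordinates. -/
theorem exists_isOpenEmbedding_prod_real (n : ℕ) (k : Fin n → ℕ) :
    ∃ f : SphereProd k × ℝ → EuclideanSpace ℝ (Fin (1 + ∑ i, k i)), IsOpenEmbedding f := by
  induction n with
  | zero =>
    let L : ℝ ≃L[ℝ] EuclideanSpace ℝ (Fin (1 + ∑ i, k i)) :=
      ContinuousLinearEquiv.ofFinrankEq (by rw [finrank_self, finrank_euclideanSpace_fin]; rfl)
    exact ⟨_, ((Homeomorph.uniqueProd _ ℝ).trans L.toHomeomorph).isOpenEmbedding⟩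
  | succ n ih =>
    obtain ⟨f, hf⟩ := ih fun i => k i.castSucc
    let Y := EuclideanSpace ℝ (Fin (k (Fin.last n)))
    let L₁ : EuclideanSpace ℝ (Fin (k (Fin.last n) + 1)) ≃L[ℝ] ℝ × Y :=
      ContinuousLinearEquiv.ofFinrankEq (by simp [Y, finrank_prod, add_comm])
    let Z := EuclideanSpace ℝ (Fin (1 + ∑ i : Fin n, k i.castSucc))
    let L₂ : (Z × Y) ≃L[ℝ] EuclideanSpace ℝ (Fin (1 + ∑ i, k i)) :=
      ContinuousLinearEquiv.ofFinrankEq (by simp [Z, Y, Fin.sum_univ_castSucc, add_assoc])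
    have h1 := ((piSnocHomeomorph fun i => sphere (0 : EuclideanSpace ℝ (Fin (k i + 1))) 1).prodCongr
      (Homeomorph.refl ℝ)).trans (Homeomorph.prodAssoc _ _ _) |>.isOpenEmbedding
    have h2 := (IsOpenEmbedding.id (X := SphereProd fun i => k i.castSucc)).prodMap
      (L₁.toHomeomorph.isOpenEmbedding.comp
        (isOpenEmbedding_exp_smul (EuclideanSpace ℝ (Fin (k (Fin.last n) + 1)))))
    have h3 := (Homeomorph.prodAssoc (SphereProd fun i => k i.castSucc) ℝ Y).symm.isOpenEmbedding
    have h4 := L₂.toHomeomorph.isOpenEmbedding.comp (hf.prodMap (IsOpenEmbedding.id (X := Y)))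
    exact ⟨_, h4.comp (h3.comp (h2.comp h1))⟩

lemma connectedSpace_unitSphere {d : ℕ} (hd : 0 < d) :
    ConnectedSpace (sphere (0 : EuclideanSpace ℝ (Fin (d + 1))) 1) := by
  refine isConnected_iff_connectedSpace.1 (isConnected_sphere ?_ 0 zero_le_one)
  rw [← finrank_eq_rank, finrank_euclideanSpace_fin]
  exact_mod_cast Nat.succ_lt_succ hd

/-- A codimension-one thickening `N × ℝ ↪ Z` gives, upon multiplying with `Y`, a thickening
`N × V ↪ Z × Y ≅ E` for `V ≅ ℝ ⊕ Y`. The isometry with the `ℓ²`-sum makes the disc bundle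
`{t² + ‖y‖² ≤ 1}`. -/
theorem exists_thickening {N Z Y V E : Type*} [TopologicalSpace N] [CompactSpace N]
    [NormedAddCommGroup Z] [NormedSpace ℝ Z] [Nontrivial Z]
    [NormedAddCommGroup Y] [InnerProductSpace ℝ Y] [Nontrivial Y]
    [NormedAddCommGroup V] [InnerProductSpace ℝ V]
    [NormedAddCommGroup E] [NormedSpace ℝ E]
    (f : N × ℝ → Z) (hf : IsOpenEmbedding f) (a : V ≃ₗᵢ[ℝ] WithLp 2 (ℝ × Y))
    (L : (Z × Y) ≃L[ℝ] E) :
    ∃ e : N × V → E, IsOpenEmbedding e ∧ IsConnected (e '' (univ ×ˢ closedBall 0 1))ᶜ := by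
  let c : V ≃ₜ ℝ × Y :=
    a.toHomeomorph.trans (WithLp.prodContinuousLinearEquiv 2 ℝ ℝ Y).toHomeomorph
  have hc : ∀ v, ‖v‖ ^ 2 = (c v).1 ^ 2 + ‖(c v).2‖ ^ 2 := fun v => by
    rw [← a.norm_map v, WithLp.prod_norm_sq_eq_of_L2, Real.norm_eq_abs, sq_abs]
    rfl
  let e : N × V → Z × Y := fun q => (f (q.1, (c q.2).1), (c q.2).2)
  have he : IsOpenEmbedding e :=
    (hf.prodMap (IsOpenEmbedding.id (X := Y))).comp
      ((Homeomorph.prodAssoc N ℝ Y).symm.isOpenEmbedding.comp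
        ((IsOpenEmbedding.id (X := N)).prodMap c.isOpenEmbedding))
  refine ⟨L ∘ e, L.toHomeomorph.isOpenEmbedding.comp he, ?_⟩
  have hcompl : (e '' (univ ×ˢ closedBall 0 1))ᶜ =
      {q : Z × Y | ∀ p t, f (p, t) = q.1 → 1 < t ^ 2 + ‖q.2‖ ^ 2} := by
    ext ⟨z, y⟩
    rw [mem_compl_iff, mem_ofPred_eq]
    constructor
    · intro h p t hpt
      by_contra! hle
      refine h ⟨(p, c.symm (t, y)), ⟨trivial, ?_⟩, ?_⟩
      · have := hc (c.symm (t, y))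
        rw [c.apply_symm_apply] at this
        rw [mem_closedBall_zero_iff]
        exact (sq_le_one_iff₀ (norm_nonneg _)).1 (this.trans_le hle)
      · simp [e, hpt]
    · rintro h ⟨⟨p, v⟩, ⟨-, hv⟩, hx⟩
      obtain ⟨h1, h2⟩ := Prod.ext_iff.1 hx
      have h3 := h p _ h1
      change (c v).2 = y at h2
      change 1 < (c v).1 ^ 2 + ‖y‖ ^ 2 at h3
      rw [← h2, ← hc v] at h3
      have hv' : ‖v‖ ≤ 1 := mem_closedBall_zero_iff.1 hv
      exact h3.not_ge ((sq_le_one_iff₀ (norm_nonneg _)).2 hv')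
  have himage : (L ∘ e) '' (univ ×ˢ closedBall 0 1) =
      L.toHomeomorph '' (e '' (univ ×ˢ closedBall 0 1)) := image_comp _ _ _
  rw [himage, ← Homeomorph.image_compl, hcompl]
  exact (isConnected_outside f hf.continuous).image _ L.continuous.continuousOn

end SphereProduct


/-- Let `n ≥ 2` and `k₁, …, kₙ` be positive integers, and set
`m := 1 + k₁ + ⋯ + kₙ`.  There is a topological embedding of `S^{k₁} × ⋯ × S^{kₙ}`
into the closed unit ball `B_m` of `ℝ^m` whose complement in `B_m` has exactly two
connected components, one of which is homeomorphic to
`ℝ^{1+kₙ} × (S^{k₁} × ⋯ × S^{k_{n-1}})`. -/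
theorem stmt_18 (n : ℕ) (hn : 2 ≤ n) (k : Fin n → ℕ) (hk : ∀ i, 0 < k i) :
    ∃ ι : ((i : Fin n) → Metric.sphere (0 : EuclideanSpace ℝ (Fin (k i + 1))) 1) →
        EuclideanSpace ℝ (Fin (1 + ∑ i, k i)),
      Topology.IsEmbedding ι ∧
      (∀ p, ι p ∈ Metric.closedBall 0 1) ∧
      Nat.card (ConnectedComponents
        ↥(Metric.closedBall (0 : EuclideanSpace ℝ (Fin (1 + ∑ i, k i))) 1 \
          Set.range ι)) = 2 ∧
      ∃ x : ↥(Metric.closedBall (0 : EuclideanSpace ℝ (Fin (1 + ∑ i, k i))) 1 \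
          Set.range ι),
        Nonempty (↥(connectedComponent x) ≃ₜ
          (EuclideanSpace ℝ (Fin (1 + k ⟨n - 1, by omega⟩)) ×
            ((j : Fin (n - 1)) →
              Metric.sphere
                (0 : EuclideanSpace ℝ (Fin (k (Fin.castLE (Nat.sub_le n 1) j) + 1))) 1))) := by
  obtain ⟨n, rfl⟩ : ∃ n', n = n' + 1 := ⟨n - 1, by omega⟩
  let k' : Fin n → ℕ := fun i => k i.castSucc
  let d := k (Fin.last n)
  let Z := EuclideanSpace ℝ (Fin (1 + ∑ i, k' i))
  let Y := EuclideanSpace ℝ (Fin d)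
  let V := EuclideanSpace ℝ (Fin (d + 1))
  let E := EuclideanSpace ℝ (Fin (1 + ∑ i, k i))
  have : ∀ i, ConnectedSpace (Metric.sphere (0 : EuclideanSpace ℝ (Fin (k' i + 1))) 1) :=
    fun i => SphereProduct.connectedSpace_unitSphere (hk _)
  have : Nontrivial Z := Module.nontrivial_of_finrank_pos (R := ℝ) (by simp [Z])
  have : Nontrivial Y := Module.nontrivial_of_finrank_pos (R := ℝ) (by simpa [Y] using hk _)
  obtain ⟨f, hf⟩ := SphereProduct.exists_isOpenEmbedding_prod_real n k'
  have hV : Module.finrank ℝ (WithLp 2 (ℝ × Y)) = d + 1 := by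
    rw [(WithLp.linearEquiv 2 ℝ (ℝ × Y)).finrank_eq]
    simp [Y, add_comm]
  let a : V ≃ₗᵢ[ℝ] WithLp 2 (ℝ × Y) :=
    ((stdOrthonormalBasis ℝ (WithLp 2 (ℝ × Y))).reindex (finCongr hV)).repr.symm
  let L : (Z × Y) ≃L[ℝ] E := ContinuousLinearEquiv.ofFinrankEq
    (by simp [Z, Y, E, k', d, Fin.sum_univ_castSucc, add_assoc])
  obtain ⟨e, he, hC⟩ := SphereProduct.exists_thickening f hf a L
  obtain ⟨ι, hι, hball, hcard, x, ⟨h⟩⟩ := SphereProduct.exists_embedding_of_thickening e he hC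
  let s := SphereProduct.piSnocHomeomorph
    fun i => Metric.sphere (0 : EuclideanSpace ℝ (Fin (k i + 1))) 1
  have hrange : Set.range (ι ∘ s) = Set.range ι := s.surjective.range_comp ι
  refine ⟨ι ∘ s, hι.comp s.isEmbedding, fun p => hball _, ?_⟩
  rw [hrange]
  let M : V ≃L[ℝ] EuclideanSpace ℝ (Fin (1 + d)) :=
    ContinuousLinearEquiv.ofFinrankEq (by simp [V, add_comm])
  exact ⟨hcard, x, ⟨h.trans (M.toHomeomorph.prodCongr (Homeomorph.refl _))⟩⟩
end
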